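/- Let h ≥ 1, k ≥ 3, n > 2k, and let H be a blue cycle on n + h vertices. Then Builder can force a red C_k or a blue cycle of length n or n+1 within h + k + 4 rounds; that is, r̃_H(C_k, {C_n, C_{n+1}}) ≤ h + k + 4. -/

import Mathlib

open SimpleGraph

/-- A board state: the set of red edges and the set of blue edges. -/
abbrev Board : Type := Set (Sym2 ℕ) × Set (Sym2 ℕ)

/-- The set of already colored edges of a board. -/
def Board.colored (B : Board) : Set (Sym2 ℕ) := B.1 ∪ B.2

/-- A Builder strategy selects an edge given the current board. -/
abbrev BuilderStrat : Type := Board → Sym2 ℕ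

/-- A Painter strategy colors the selected edge (true = red, false = blue). -/
abbrev PainterStrat : Type := Board → Sym2 ℕ → Bool

/-- The board after `t` rounds of play from `init`. -/
def playGame (b : BuilderStrat) (p : PainterStrat) (init : Board) : ℕ → Board
  | 0 => init
  | t + 1 =>
      let B := playGame b p init t
      let e := b B
      if p B e then (insert e B.1, B.2) else (B.1, insert e B.2)

/-- Builder's strategy is valid from `init`: along any play it always selects a
previously unselected non-loop edge. -/
def ValidFrom (b : BuilderStrat) (init : Board) : Prop :=
  ∀ p : PainterStrat, ∀ t : ℕ,
    ¬ (b (playGame b p init t)).IsDiag ∧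
      b (playGame b p init t) ∉ (playGame b p init t).colored

/-- Builder can force the winning condition `W` within `t` rounds, starting from `init`. -/
def BuilderWinsIn (init : Board) (W : Board → Prop) (t : ℕ) : Prop :=
  ∃ b : BuilderStrat, ValidFrom b init ∧
    ∀ p : PainterStrat, ∃ s, s ≤ t ∧ W (playGame b p init s)

/-- `G` contains a copy of `H`. -/
def HasCopy {α β : Type} (H : SimpleGraph α) (G : SimpleGraph β) : Prop :=
  ∃ f : α ↪ β, ∀ x y, H.Adj x y → G.Adj (f x) (f y)

/-- The red part of the board contains a copy of `H`. -/
def RedCopy {α : Type} (H : SimpleGraph α) (B : Board) : Prop :=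
  HasCopy H (fromEdgeSet B.1)

/-- The blue part of the board contains a copy of `H`. -/
def BlueCopy {α : Type} (H : SimpleGraph α) (B : Board) : Prop :=
  HasCopy H (fromEdgeSet B.2)

/-- The empty board. -/
def emptyBoard : Board := (∅, ∅)

/-- Winning condition: a red `C_k` or a blue `C_n`. -/
def WinCC (k n : ℕ) (B : Board) : Prop :=
  RedCopy (cycleGraph k) B ∨ BlueCopy (cycleGraph n) B

/-- Winning condition: a red `C_k` or a blue path on `n` vertices. -/
def WinCP (k n : ℕ) (B : Board) : Prop :=
  RedCopy (cycleGraph k) B ∨ BlueCopy (pathGraph n) B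

/-- A board consisting of a single blue cycle on the vertices `0, …, m-1`. -/
def blueCycleBoard (m : ℕ) : Board :=
  (∅, {e | ∃ i : ℕ, i < m ∧ e = s(i, (i + 1) % m)})

/-- A board consisting of a single blue path on the vertices `0, …, m-1`. -/
def bluePathBoard (m : ℕ) : Board :=
  (∅, {e | ∃ i : ℕ, i + 1 < m ∧ e = s(i, i + 1)})

/-- The board after the edge `e` has been coloured red. -/
def Board.addRed (B : Board) (e : Sym2 ℕ) : Board := (insert e B.1, B.2)

/-- The board after the edge `e` has been coloured blue. -/
def Board.addBlue (B : Board) (e : Sym2 ℕ) : Board := (B.1, insert e B.2)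

/-- Positions from which `W` can be forced within a given number of rounds, by recursion on
that number. -/
def Forces (W : Board → Prop) : ℕ → Board → Prop
  | 0, B => W B
  | t + 1, B => W B ∨ ∃ e : Sym2 ℕ, ¬ e.IsDiag ∧ e ∉ B.colored ∧
      Forces W t (B.addRed e) ∧ Forces W t (B.addBlue e)

theorem Forces.of_win {W : Board → Prop} {B : Board} (hB : W B) : ∀ t, Forces W t B
  | 0 => hB
  | _ + 1 => Or.inl hB

theorem Forces.succ {W : Board → Prop} :
    ∀ {t : ℕ} {B : Board}, Forces W t B → Forces W (t + 1) B
  | 0, _, hB => Or.inl hB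
  | _ + 1, _, Or.inl hB => Or.inl hB
  | _ + 1, _, Or.inr ⟨e, hd, hc, hr, hb⟩ => Or.inr ⟨e, hd, hc, hr.succ, hb.succ⟩

/-- Selecting an already coloured edge would only waste a round. -/
theorem Forces.step {W : Board → Prop} {t : ℕ} {B : Board} (e : Sym2 ℕ) (hd : ¬ e.IsDiag)
    (hr : Forces W t (B.addRed e)) (hb : Forces W t (B.addBlue e)) : Forces W (t + 1) B := by
  by_cases hc : e ∈ B.colored
  · rcases hc with hc | hc
    · rw [Board.addRed, Set.insert_eq_of_mem hc] at hr
      exact hr.succ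
    · rw [Board.addBlue, Set.insert_eq_of_mem hc] at hb
      exact hb.succ
  · exact Or.inr ⟨e, hd, hc, hr, hb⟩

theorem exists_uncolored_edge {B : Board} (hB : B.colored.Finite) :
    ∃ e : Sym2 ℕ, ¬ e.IsDiag ∧ e ∉ B.colored := by
  have hinj : Function.Injective (fun i : ℕ => s(0, i + 1)) := by
    intro i j hij
    simpa using hij
  obtain ⟨e, ⟨i, rfl⟩, he⟩ := (Set.infinite_range_of_injective hinj).exists_notMem_finite hB
  exact ⟨_, by simp, he⟩

open Classical in
/-- A move that decreases the number of rounds in which `W` can be forced, if there is one. -/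
theorem exists_good_move (W : Board → Prop) (B : Board) :
    ∃ e : Sym2 ℕ, (B.colored.Finite → ¬ e.IsDiag ∧ e ∉ B.colored) ∧
      (B.colored.Finite → ∀ t, Forces W (t + 1) B → W B ∨
        Forces W t (B.addRed e) ∧ Forces W t (B.addBlue e)) := by
  by_cases hfin : B.colored.Finite
  swap
  · exact ⟨s(0, 0), fun h => absurd h hfin, fun h => absurd h hfin⟩
  by_cases hW : W B
  · obtain ⟨e, he⟩ := exists_uncolored_edge hfin
    exact ⟨e, fun _ => he, fun _ _ _ => Or.inl hW⟩
  by_cases hex : ∃ t, Forces W (t + 1) B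
  · rcases Nat.find_spec hex with h | ⟨e, hd, hc, hr, hb⟩
    · exact absurd h hW
    · refine ⟨e, fun _ => ⟨hd, hc⟩, fun _ t ht => Or.inr ?_⟩
      have hle : Nat.find hex ≤ t := Nat.find_min' hex ht
      exact ⟨Nat.le_induction hr (fun _ _ h => h.succ) t hle,
        Nat.le_induction hb (fun _ _ h => h.succ) t hle⟩
  · obtain ⟨e, he⟩ := exists_uncolored_edge hfin
    exact ⟨e, fun _ => he, fun _ t ht => absurd ⟨t, ht⟩ hex⟩

theorem playGame_colored_finite (b : BuilderStrat) (p : PainterStrat) {init : Board}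
    (hinit : init.colored.Finite) : ∀ t, (playGame b p init t).colored.Finite
  | 0 => hinit
  | t + 1 => by
      have ih := playGame_colored_finite b p hinit t
      refine (ih.insert (b (playGame b p init t))).subset ?_
      simp only [playGame]
      split <;> intro x hx <;> simp only [Board.colored, Set.mem_union, Set.mem_insert_iff] at * <;>
        tauto

theorem Forces.builderWinsIn {W : Board → Prop} {init : Board} {t : ℕ}
    (hinit : init.colored.Finite) (hF : Forces W t init) : BuilderWinsIn init W t := by
  choose b hvalid hgood using exists_good_move W
  refine ⟨b, fun p t => hvalid _ (playGame_colored_finite b p hinit t), fun p => ?_⟩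
  by_contra! hno
  have key : ∀ s, s ≤ t → Forces W (t - s) (playGame b p init s) := by
    intro s
    induction s with
    | zero => exact fun _ => hF
    | succ s ih =>
      intro hs
      have h1 := ih (by omega)
      rw [show t - s = t - (s + 1) + 1 by omega] at h1
      rcases hgood _ (playGame_colored_finite b p hinit s) _ h1 with h2 | ⟨h2, h3⟩
      · exact absurd h2 (hno s (by omega))
      · simp only [playGame]
        split
        · exact h2
        · exact h3
  have := key t le_rfl
  rw [Nat.sub_self] at this
  exact hno t le_rfl this

theorem BuilderWinsIn.mono {W : Board → Prop} {init : Board} {s t : ℕ} (hst : s ≤ t)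
    (h : BuilderWinsIn init W s) : BuilderWinsIn init W t := by
  obtain ⟨b, hv, hw⟩ := h
  refine ⟨b, hv, fun p => ?_⟩
  obtain ⟨r, hr, hW⟩ := hw p
  exact ⟨r, hr.trans hst, hW⟩

/-- `f 0, …, f (N - 1)` is a cycle with edges in `S`. -/
structure IsCycleIn (S : Set (Sym2 ℕ)) (N : ℕ) (f : ℕ → ℕ) : Prop where
  inj : ∀ i j, i < N → j < N → f i = f j → i = j
  edge : ∀ i, i + 1 < N → s(f i, f (i + 1)) ∈ S
  close : s(f (N - 1), f 0) ∈ S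

theorem IsCycleIn.mono {S T : Set (Sym2 ℕ)} {N : ℕ} {f : ℕ → ℕ} (h : IsCycleIn S N f)
    (hST : S ⊆ T) : IsCycleIn T N f :=
  ⟨h.inj, fun i hi => hST (h.edge i hi), hST h.close⟩

theorem IsCycleIn.hasCopy {S : Set (Sym2 ℕ)} {N : ℕ} {f : ℕ → ℕ} (h : IsCycleIn S N f) :
    HasCopy (cycleGraph N) (fromEdgeSet S) := by
  have key : ∀ u v : Fin N, (v - u).val = 1 → s(f u, f v) ∈ S := by
    intro u v huv
    have hu := u.isLt
    have hv := v.isLt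
    rw [Fin.val_sub] at huv
    rcases Nat.lt_or_ge (u : ℕ) v with hlt | hge
    · rw [show N - (u : ℕ) + v = (v - u) + N by omega, Nat.add_mod_right,
        Nat.mod_eq_of_lt (by omega)] at huv
      have := h.edge u (by omega)
      rwa [show (u : ℕ) + 1 = v by omega] at this
    · rcases Nat.eq_or_lt_of_le hge with heq | hlt
      · rw [show N - (u : ℕ) + v = N by omega, Nat.mod_self] at huv
        exact absurd huv zero_ne_one
      · rw [Nat.mod_eq_of_lt (by omega)] at huv
        have := h.close
        rwa [show N - 1 = (u : ℕ) by omega, show 0 = (v : ℕ) by omega] at this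
  refine ⟨⟨fun i => f i, fun i j hij => Fin.ext (h.inj i j i.isLt j.isLt hij)⟩, ?_⟩
  intro x y hxy
  rw [fromEdgeSet_adj]
  refine ⟨?_, fun he => hxy.ne (Fin.ext (h.inj x y x.isLt y.isLt he))⟩
  rcases cycleGraph_adj'.1 hxy with h1 | h1
  · rw [Sym2.eq_swap]
    exact key y x h1
  · exact key x y h1

/-- A chord skipping `d` consecutive vertices shortens a cycle by `d`. -/
theorem IsCycleIn.shortcut {S : Set (Sym2 ℕ)} {N d a : ℕ} {f : ℕ → ℕ}
    (h : IsCycleIn S (N + d) f) (ha : a + 1 < N) (hc : s(f a, f (a + d + 1)) ∈ S) :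
    IsCycleIn S N (fun i => if i ≤ a then f i else f (i + d)) := by
  refine ⟨fun i j hi hj hij => ?_, fun i hi => ?_, ?_⟩
  · split_ifs at hij <;> have := h.inj _ _ (by omega) (by omega) hij <;> omega
  · rcases lt_trichotomy i a with hia | rfl | hia
    · simpa [hia.le, Nat.succ_le_of_lt hia] using h.edge i (by omega)
    · simpa [show i + 1 + d = i + d + 1 by omega] using hc
    · have := h.edge (i + d) (by omega)
      simpa [show ¬ i ≤ a by omega, show ¬ i + 1 ≤ a by omega,
        show i + 1 + d = i + d + 1 by omega] using this
  · have := h.close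
    simpa [show ¬ N - 1 ≤ a by omega, show N - 1 + d = N + d - 1 by omega] using this

/-- Two crossing chords `{0, b}` and `{2, b + h}` shorten a cycle by `h`. -/
theorem IsCycleIn.crossing {S : Set (Sym2 ℕ)} {n h b : ℕ} {f : ℕ → ℕ}
    (hf : IsCycleIn S (n + h) f) (hh : 1 ≤ h) (hb : 3 ≤ b) (hbn : b < n)
    (h₁ : s(f 0, f b) ∈ S) (h₂ : s(f 2, f (b + h)) ∈ S) :
    IsCycleIn S n (fun i => if i + 2 ≤ b then f (i + 2) else if i + 1 = b then f 0
      else f (n + h + b - 1 - i)) := by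
  refine ⟨fun i j hi hj hij => ?_, fun i hi => ?_, ?_⟩
  · split_ifs at hij <;> have := hf.inj _ _ (by omega) (by omega) hij <;> omega
  · rcases lt_trichotomy (i + 2) b with hib | hib | hib
    · have := hf.edge (i + 2) (by omega)
      simpa [show i + 2 ≤ b by omega, show i + 1 + 2 ≤ b by omega,
        show i + 1 + 2 = i + 2 + 1 by omega] using this
    · rw [Sym2.eq_swap] at h₁
      simpa [show i + 2 ≤ b by omega, show ¬ i + 1 + 2 ≤ b by omega,
        show i + 1 + 1 = b by omega, hib] using h₁
    · rcases Nat.eq_or_lt_of_le (Nat.le_of_lt_succ hib) with hib' | hib'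
      · have := hf.close
        rw [Sym2.eq_swap] at this
        simpa [show ¬ i + 2 ≤ b by omega, show ¬ i + 1 + 2 ≤ b by omega,
          show i + 1 = b by omega,
          show n + h + b - 1 - b = n + h - 1 by omega] using this
      · have := hf.edge (n + h + b - 1 - (i + 1)) (by omega)
        rw [Sym2.eq_swap] at this
        simpa [show ¬ i + 2 ≤ b by omega, show ¬ i + 1 + 2 ≤ b by omega,
          show ¬ i + 1 = b by omega, show ¬ i + 1 + 1 = b by omega,
          show n + h + b - 1 - (i + 1) + 1 = n + h + b - 1 - i by omega] using this
  · rw [Sym2.eq_swap] at h₂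
    simpa [show ¬ n - 1 + 2 ≤ b by omega, show ¬ n - 1 + 1 = b by omega,
      show n + h + b - 1 - (n - 1) = b + h by omega, show 2 ≤ b by omega] using h₂

/-- The winning condition: a red `C_k`, a blue `C_n` or a blue `C_{n+1}`. -/
def RedOrTwoBlueCycles (k n : ℕ) (B : Board) : Prop :=
  RedCopy (cycleGraph k) B ∨ BlueCopy (cycleGraph n) B ∨ BlueCopy (cycleGraph (n + 1)) B

/-- The end of Builder's strategy, once there is a red path `0, 2, …, 2k - 2` along
the blue cycle. -/
theorem forces_of_red_path {k n h : ℕ} (hh : 1 ≤ h) (hk : 3 ≤ k) (hn : 2 * k < n)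
    {B : Board} {f : ℕ → ℕ} (hf : IsCycleIn B.2 (n + h) f)
    (hred : ∀ i, i + 1 < k → s(f (2 * i), f (2 * i + 2)) ∈ B.1) :
    Forces (RedOrTwoBlueCycles k n) 3 B := by
  have hne : ∀ i j, i < n + h → j < n + h → i ≠ j → ¬ (s(f i, f j)).IsDiag := by
    intro i j hi hj hij hd
    exact hij (hf.inj i j hi hj (by simpa using hd))
  refine Forces.step s(f 0, f (2 * k - 2)) (hne _ _ (by omega) (by omega) (by omega)) ?_ ?_
  · refine Forces.of_win (Or.inl (IsCycleIn.hasCopy (f := fun i => f (2 * i)) ?_)) _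
    refine ⟨fun i j hi hj hij => ?_, fun i hi => Or.inr (hred i hi), Or.inl ?_⟩
    · have := hf.inj _ _ (by omega) (by omega) hij
      omega
    · rw [Sym2.eq_swap, show 2 * (k - 1) = 2 * k - 2 by omega]
  refine Forces.step s(f (2 * k - 2), f (2 * k - 2 + h))
    (hne _ _ (by omega) (by omega) (by omega)) ?_ ?_
  swap
  · obtain ⟨d, rfl⟩ : ∃ d, h = d + 1 := ⟨h - 1, by omega⟩
    refine Forces.of_win (Or.inr (Or.inr (IsCycleIn.hasCopy
      (IsCycleIn.shortcut (d := d) (a := 2 * k - 2) (f := f) ?_ (by omega) ?_)))) _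
    · rw [show n + 1 + d = n + (d + 1) by omega]
      exact hf.mono fun x hx => Or.inr (Or.inr hx)
    · exact Or.inl rfl
  refine Forces.step s(f 2, f (2 * k - 2 + h))
    (hne _ _ (by omega) (by omega) (by omega)) ?_ ?_
  · refine Forces.of_win (Or.inl (IsCycleIn.hasCopy
      (f := fun i => if i + 1 < k then f (2 * i + 2) else f (2 * k - 2 + h)) ?_)) _
    refine ⟨fun i j hi hj hij => ?_, fun i hi => ?_, Or.inl ?_⟩
    · split_ifs at hij <;> have := hf.inj _ _ (by omega) (by omega) hij <;> omega
    · by_cases hik : i + 1 + 1 < k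
      · refine Or.inr (Or.inr ?_)
        simpa [Board.addBlue, hi, hik, show 2 * (i + 1) = 2 * i + 2 by omega]
          using hred (i + 1) hik
      · refine Or.inr (Or.inl ?_)
        simp [hi, hik, show 2 * i + 2 = 2 * k - 2 by omega]
    · rw [Sym2.eq_swap]
      simp [show ¬ k - 1 + 1 < k by omega, show 1 < k by omega]
  · refine Forces.of_win (Or.inr (Or.inl (IsCycleIn.hasCopy
      (IsCycleIn.crossing (h := h) (b := 2 * k - 2) (f := f) ?_ hh (by omega) (by omega)
        ?_ ?_)))) _
    · exact hf.mono fun x hx => Or.inr (Or.inr hx)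
    · exact Or.inr (Or.inl rfl)
    · exact Or.inl rfl

/-- Builder extends the red path `0, 2, …, 2t` along the blue cycle; each blue answer
shortens the cycle by one. -/
theorem forces_of_partial_red_path {k n : ℕ} (hk : 3 ≤ k) (hn : 2 * k < n) :
    ∀ (m h t : ℕ) (B : Board) (f : ℕ → ℕ), t < k → m + t + 1 = h + k →
      IsCycleIn B.2 (n + h) f → (∀ i, i < t → s(f (2 * i), f (2 * i + 2)) ∈ B.1) →
      Forces (RedOrTwoBlueCycles k n) (m + 3) B := by
  intro m
  induction m with
  | zero =>
    intro h t B f ht hm hf hred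
    obtain rfl : h = 0 := by omega
    exact Forces.of_win (Or.inr (Or.inl hf.hasCopy)) _
  | succ m ih =>
    intro h t B f ht hm hf hred
    rcases Nat.eq_zero_or_pos h with rfl | hh
    · exact Forces.of_win (Or.inr (Or.inl hf.hasCopy)) _
    rcases Nat.eq_or_lt_of_le (Nat.succ_le_of_lt ht) with htk | htk
    · have h3 : Forces (RedOrTwoBlueCycles k n) 3 B :=
        forces_of_red_path hh hk hn hf fun i hi => hred i (by omega)
      exact Nat.le_induction h3 (fun _ _ h => h.succ) (m + 1 + 3) (by omega)
    refine Forces.step s(f (2 * t), f (2 * t + 2)) ?_ ?_ ?_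
    · intro hd
      have := hf.inj (2 * t) (2 * t + 2) (by omega) (by omega) (by simpa using hd)
      omega
    · refine ih h (t + 1) _ f htk (by omega) hf fun i hi => ?_
      rcases Nat.eq_or_lt_of_le (Nat.le_of_lt_succ hi) with rfl | hi'
      · exact Or.inl rfl
      · exact Or.inr (hred i hi')
    · obtain ⟨d, rfl⟩ : ∃ d, h = d + 1 := ⟨h - 1, by omega⟩
      refine ih d t _ _ ht (by omega) (IsCycleIn.shortcut (d := 1) (a := 2 * t) (f := f)
        (hf.mono fun x hx => Or.inr hx) (by omega) (Or.inl rfl)) fun i hi => ?_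
      simpa [Board.addBlue, show 2 * i ≤ 2 * t by omega, show 2 * i + 2 ≤ 2 * t by omega,
        show i ≤ t by omega] using hred i hi

/-- If `h ≥ 1`, `k ≥ 3`, `n > 2k` and the board contains a blue cycle on `n + h`
vertices, then `r̃_H(C_k, {C_n, C_{n+1}}) ≤ h + k + 4`. -/
theorem shorten_blue_cycle_by_Ok (k n h : ℕ) (hh : 1 ≤ h) (hk : 3 ≤ k)
    (hn : 2 * k < n) :
    BuilderWinsIn (blueCycleBoard (n + h))
      (fun B => RedCopy (SimpleGraph.cycleGraph k) B ∨
        BlueCopy (SimpleGraph.cycleGraph n) B ∨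
        BlueCopy (SimpleGraph.cycleGraph (n + 1)) B)
      (h + k + 4) := by
  refine BuilderWinsIn.mono (s := h + k - 1 + 3) (by omega) (Forces.builderWinsIn ?_ ?_)
  · simp only [Board.colored, blueCycleBoard, Set.empty_union]
    refine ((Set.finite_lt_nat (n + h)).image fun i => s(i, (i + 1) % (n + h))).subset ?_
    rintro e ⟨i, hi, rfl⟩
    exact ⟨i, hi, rfl⟩
  · refine forces_of_partial_red_path hk hn (h + k - 1) h 0 _ id (by omega) (by omega)
      ⟨fun i j _ _ hij => hij, fun i hi => ⟨i, by omega, ?_⟩, ⟨n + h - 1, by omega, ?_⟩⟩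
      fun i hi => absurd hi (Nat.not_lt_zero i)
    · rw [Nat.mod_eq_of_lt hi, id, id]
    · rw [show n + h - 1 + 1 = n + h by omega, Nat.mod_self, id, id]
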